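/- Let n = 5, let α_1, …, α_5 ∈ ℝ (indices mod 5) satisfy sin(α_{j+1} − α_j) ≠ 0 for all j, let P_θ be the associated 5×5 perpendicular-bisector evolute matrix, and let C, S ∈ ℝ⁵ be given by C_j = cos α_j, S_j = sin α_j. Then there exists λ ∈ ℝ such that for every p ∈ ℝ⁵, P_θ³·p − λ·(P_θ·p) ∈ span{C, S}. Geometrically: the third perpendicular-bisector evolute of any pentagon is homothetic to its first perpendicular-bisector evolute (Grünbaum's conjecture). -/

import Mathlib

open Real

/-- The perpendicular-bisector evolute matrix `P_θ` associated with the cyclic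
sequence of normal angles `α`. -/
noncomputable def Pmat (n : ℕ) [NeZero n] (α : Fin n → ℝ) : Matrix (Fin n) (Fin n) ℝ :=
  Matrix.of fun j k =>
    if k = j then
      (Real.cos (α j - α (j - 1)) / Real.sin (α j - α (j - 1)) -
        Real.cos (α (j + 1) - α j) / Real.sin (α (j + 1) - α j)) / 2
    else if k = j + 1 then 1 / (2 * Real.sin (α (j + 1) - α j))
    else if k = j - 1 then -(1 / (2 * Real.sin (α j - α (j - 1))))
    else 0

lemma Pmat_mulVec (α : Fin 5 → ℝ) (p : Fin 5 → ℝ) (j : Fin 5) :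
    (Pmat 5 α).mulVec p j =
      ((p (j+1) - cos (α (j+1) - α j) * p j) / sin (α (j+1) - α j)
        - (p (j-1) - cos (α j - α (j-1)) * p j) / sin (α j - α (j-1))) / 2 := by
  fin_cases j <;> simp [Matrix.mulVec, dotProduct, Pmat, Fin.sum_univ_five] <;>
    try simp [show (-1 : Fin 5) = 4 from rfl, Fin.ext_iff]
  all_goals ring_nf

lemma Pmat_of (α : Fin 5 → ℝ) (hsin : ∀ j : Fin 5, sin (α (j + 1) - α j) ≠ 0)
    (p : Fin 5 → ℝ) (x y : Fin 5 → ℝ)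
    (h1 : ∀ j, p (j+1) = cos (α (j+1) - α j) * p j + sin (α (j+1) - α j) * x j)
    (h2 : ∀ j, p (j-1) = cos (α j - α (j-1)) * p j + sin (α j - α (j-1)) * y j) :
    (Pmat 5 α).mulVec p = fun j => (x j - y j) / 2 := by
  funext j
  have e1 := hsin j
  have e2 : sin (α j - α (j-1)) ≠ 0 := by
    have := hsin (j-1)
    rwa [sub_add_cancel] at this
  rw [Pmat_mulVec, h1, h2]
  field_simp
  ring

lemma trace_P (α : Fin 5 → ℝ) : (Pmat 5 α).trace = 0 := by
  simp [Matrix.trace, Pmat, Fin.sum_univ_five]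
  simp [show (-1 : Fin 5) = 4 from rfl]
  ring

lemma abstract_lemma (f : (Fin 5 → ℝ) →ₗ[ℝ] (Fin 5 → ℝ)) (htr : LinearMap.trace ℝ _ f = 0)
    (K C S : Fin 5 → ℝ) (hli : LinearIndependent ℝ ![K, C, S])
    (hK : f K = 0) (hC : f C = -S) (hS : f S = C) :
    ∃ lam : ℝ, ∀ p, f (f (f p)) - lam • f p ∈ Submodule.span ℝ ({C, S} : Set (Fin 5 → ℝ)) := by
  obtain ⟨v, hv⟩ := exists_linearIndependent_cons_of_lt_finrank hli (by simp)
  obtain ⟨w, hw⟩ := exists_linearIndependent_cons_of_lt_finrank hv (by simp)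
  let b : Module.Basis (Fin 5) ℝ (Fin 5 → ℝ) := basisOfLinearIndependentOfCardEqFinrank hw (by simp)
  have b0 : b 0 = w := by simp [b]
  have b1 : b 1 = v := by simp [b]
  have b2 : b 2 = K := by simp [b]
  have b3 : b 3 = C := by simp [b]
  have b4 : b 4 = S := by simp [b]
  rw [LinearMap.trace_eq_matrix_trace ℝ b, Matrix.trace] at htr
  simp only [Fin.sum_univ_five, Matrix.diag, LinearMap.toMatrix_apply, b2, b3, b4, hK, hC, hS] at htr
  have r3 : b.repr C 4 = 0 ∧ b.repr C 3 = 1 := by rw [← b3]; simp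
  have r4 : b.repr S 3 = 0 ∧ b.repr S 4 = 1 := by rw [← b4]; simp
  simp [r3, r4] at htr
  have ew := b.sum_repr (f (b 0))
  have ev := b.sum_repr (f (b 1))
  simp only [Fin.sum_univ_five] at ew ev
  set a := b.repr (f (b 0)) 0
  set d := b.repr (f (b 1)) 1
  set w1 := b.repr (f (b 0)) 1
  set v0 := b.repr (f (b 1)) 0
  set w2 := b.repr (f (b 0)) 2
  set w3 := b.repr (f (b 0)) 3
  set w4 := b.repr (f (b 0)) 4
  set v2 := b.repr (f (b 1)) 2
  set v3 := b.repr (f (b 1)) 3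
  set v4 := b.repr (f (b 1)) 4
  rw [b0, b1, b2, b3, b4] at ew ev
  have hd : d = -a := by linarith
  rw [hd] at ev
  refine ⟨a^2 + w1 * v0, fun p => ?_⟩
  have ep := b.sum_repr p
  simp only [Fin.sum_univ_five, b0, b1, b2, b3, b4] at ep
  generalize b.repr p 0 = p0 at ep
  generalize b.repr p 1 = p1 at ep
  generalize b.repr p 2 = p2 at ep
  generalize b.repr p 3 = p3 at ep
  generalize b.repr p 4 = p4 at ep
  -- reduce to each of the five basis vectors
  let N : Submodule ℝ (Fin 5 → ℝ) := Submodule.span ℝ ({C, S} : Set (Fin 5 → ℝ))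
  let g := f ∘ₗ f ∘ₗ f - (a^2 + w1 * v0) • f
  have hCN : C ∈ N := Submodule.subset_span (by simp)
  have hSN : S ∈ N := Submodule.subset_span (by simp)
  have gK : g K ∈ N := by simp [g, hK]
  have gC : g C ∈ N := by
    simp only [g, LinearMap.sub_apply, LinearMap.comp_apply, LinearMap.smul_apply, hC, hS, map_neg]
    exact N.sub_mem (N.neg_mem (N.neg_mem hSN)) (N.smul_mem _ (N.neg_mem hSN))
  have gS : g S ∈ N := by
    simp only [g, LinearMap.sub_apply, LinearMap.comp_apply, LinearMap.smul_apply, hC, hS, map_neg]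
    exact N.sub_mem (N.neg_mem hCN) (N.smul_mem _ hCN)
  have gw : g w ∈ N := by
    have h2 : f (f w) = (a^2 + w1 * v0) • w + (a * w2 + w1 * v2) • K
        + (a * w3 + w1 * v3 + w4) • C + (a * w4 + w1 * v4 - w3) • S := by
      rw [← ew]
      simp only [map_add, map_smul, hK, hC, hS]
      rw [← ew, ← ev]
      module
    have : g w = (a * w4 + w1 * v4 - w3) • C + (-(a * w3 + w1 * v3 + w4)) • S := by
      simp only [g, LinearMap.sub_apply, LinearMap.comp_apply, LinearMap.smul_apply, h2,
        map_add, map_smul, hK, hC, hS]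
      module
    rw [this]
    exact N.add_mem (N.smul_mem _ hCN) (N.smul_mem _ hSN)
  have gv : g v ∈ N := by
    have h2 : f (f v) = (a^2 + w1 * v0) • v + (v0 * w2 - a * v2) • K
        + (v0 * w3 - a * v3 + v4) • C + (v0 * w4 - a * v4 - v3) • S := by
      rw [← ev]
      simp only [map_add, map_smul, hK, hC, hS]
      rw [← ew, ← ev]
      module
    have : g v = (v0 * w4 - a * v4 - v3) • C + (-(v0 * w3 - a * v3 + v4)) • S := by
      simp only [g, LinearMap.sub_apply, LinearMap.comp_apply, LinearMap.smul_apply, h2,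
        map_add, map_smul, hK, hC, hS]
      module
    rw [this]
    exact N.add_mem (N.smul_mem _ hCN) (N.smul_mem _ hSN)
  have : f (f (f p)) - (a^2 + w1 * v0) • f p = g p := by simp [g]
  rw [this, ← ep]
  simp only [map_add, map_smul]
  exact N.add_mem (N.add_mem (N.add_mem (N.add_mem (N.smul_mem _ gw) (N.smul_mem _ gv))
    (N.smul_mem _ gK)) (N.smul_mem _ gC)) (N.smul_mem _ gS)

lemma kernel_aux (α : Fin 5 → ℝ) (hsin : ∀ j : Fin 5, sin (α (j + 1) - α j) ≠ 0) :
    ∃ K : Fin 5 → ℝ, (Pmat 5 α).mulVec K = 0 ∧ K ≠ 0 := by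
  let β : Fin 5 → ℝ := fun j => α (j+1) - α (j+2) + α (j+3) - α (j+4)
  have hβ : ∀ j, β (j+1) = (α (j+1) - α j) - β j := by
    intro j
    fin_cases j <;> simp [β] <;> norm_num [Fin.add_def] <;> ring
  have hβ' : ∀ j, β (j-1) = (α j - α (j-1)) - β j := by
    intro j
    have := hβ (j-1)
    rw [sub_add_cancel] at this
    linarith
  refine ⟨fun j => cos (β j), ?_, ?_⟩
  · rw [Pmat_of α hsin _ (fun j => sin (β j)) (fun j => sin (β j))]
    · funext j; simp
    · intro j; simp only [hβ, cos_sub]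
    · intro j; simp only [hβ', cos_sub]
  · intro h
    have h0 : cos (β 0) = 0 := congrFun h 0
    have h1 : cos (β (0+1)) = 0 := congrFun h (0+1)
    rw [hβ, cos_sub, h0] at h1
    have h2 : sin (β 0) = 0 := by
      rw [mul_zero, zero_add] at h1
      exact (mul_eq_zero.1 h1).resolve_left (hsin 0)
    have := sin_sq_add_cos_sq (β 0)
    rw [h2, h0] at this
    norm_num at this

lemma final_aux (α : Fin 5 → ℝ)
    (hsin : ∀ j : Fin 5, Real.sin (α (j + 1) - α j) ≠ 0)
    (C S : Fin 5 → ℝ)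
    (hC : ∀ j : Fin 5, C j = Real.cos (α j))
    (hS : ∀ j : Fin 5, S j = Real.sin (α j)) :
    ∃ lam : ℝ, ∀ p : Fin 5 → ℝ,
      (Pmat 5 α).mulVec ((Pmat 5 α).mulVec ((Pmat 5 α).mulVec p)) -
          lam • (Pmat 5 α).mulVec p ∈
        Submodule.span ℝ ({C, S} : Set (Fin 5 → ℝ)) := by
  obtain ⟨K, hK, hK0⟩ := kernel_aux α hsin
  have PC : (Pmat 5 α).mulVec C = -S := by
    rw [Pmat_of α hsin C (fun j => - S j) (fun j => S j)]
    · funext j; simp; ring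
    · intro j
      simp only [hC, hS]
      have := cos_add (α (j+1) - α j) (α j)
      rw [sub_add_cancel] at this
      linarith
    · intro j
      simp only [hC, hS]
      have := cos_sub (α j) (α j - α (j-1))
      rw [sub_sub_cancel] at this
      linarith
  have PS : (Pmat 5 α).mulVec S = C := by
    rw [Pmat_of α hsin S (fun j => C j) (fun j => - C j)]
    · funext j; simp
    · intro j
      simp only [hC, hS]
      have := sin_add (α (j+1) - α j) (α j)
      rw [sub_add_cancel] at this
      linarith
    · intro j
      simp only [hC, hS]
      have := sin_sub (α j) (α j - α (j-1))
      rw [sub_sub_cancel] at this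
      linarith
  have hCS : ∀ s t : ℝ, s • C + t • S = 0 → s = 0 ∧ t = 0 := by
    intro s t h
    have h0 := congrFun h 0
    have h1 := congrFun h (0+1)
    simp only [Pi.add_apply, Pi.smul_apply, smul_eq_mul, hC, hS, Pi.zero_apply] at h0 h1
    have hs := hsin 0
    rw [sin_sub] at hs
    constructor
    · apply (mul_eq_zero.1 _).resolve_right hs
      linear_combination sin (α (0+1)) * h0 - sin (α 0) * h1
    · apply (mul_eq_zero.1 _).resolve_right hs
      linear_combination -cos (α (0+1)) * h0 + cos (α 0) * h1
  have hli : LinearIndependent ℝ ![K, C, S] := by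
    rw [Fintype.linearIndependent_iff]
    intro g hg
    simp [Fin.sum_univ_three] at hg
    have h := congrArg (Pmat 5 α).mulVec hg
    simp only [Matrix.mulVec_add, Matrix.mulVec_smul, hK, PC, PS, Matrix.mulVec_zero] at h
    obtain ⟨h2, h1⟩ := hCS (g 2) (-g 1) (by rw [← h]; module)
    have h1 : g 1 = 0 := by linarith
    have h0 : g 0 = 0 := by simpa [h1, h2, hK0] using hg
    intro i; fin_cases i <;> assumption
  have := abstract_lemma (Matrix.toLin' (Pmat 5 α)) (by rw [Matrix.trace_toLin'_eq, trace_P]) K C S hli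
    (by simpa using hK) (by simpa using PC) (by simpa using PS)
  simpa using this

/-- **Grünbaum's conjecture.** The third perpendicular-bisector
evolute of any pentagon is homothetic to its first one: there is `λ ∈ ℝ` such that
`P_θ³ p − λ·(P_θ p) ∈ span{C, S}` for all support vectors `p`. -/
theorem stmt_12 (α : Fin 5 → ℝ)
    (hsin : ∀ j : Fin 5, Real.sin (α (j + 1) - α j) ≠ 0)
    (C S : Fin 5 → ℝ)
    (hC : ∀ j : Fin 5, C j = Real.cos (α j))
    (hS : ∀ j : Fin 5, S j = Real.sin (α j)) :
    ∃ lam : ℝ, ∀ p : Fin 5 → ℝ,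
      (Pmat 5 α).mulVec ((Pmat 5 α).mulVec ((Pmat 5 α).mulVec p)) -
          lam • (Pmat 5 α).mulVec p ∈
        Submodule.span ℝ ({C, S} : Set (Fin 5 → ℝ)) := by
  exact final_aux α hsin C S hC hS
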